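/- Let (X,Y) be a pair of random variables with X binary, and let (X₁,Y₁),(X₂,Y₂) be two independent copies. With U₁ = X₁ ⊕ X₂ and U₂ = X₂, we have H(U₁ | Y₁,Y₂) ≥ H(X|Y) ≥ H(U₂ | Y₁,Y₂,U₁). -/

import Mathlib

/-- Conditional Shannon entropy (base 2) of a joint pmf `q x y`. -/
noncomputable def condEnt {α β : Type*} [Fintype α] (q : α → β → ℝ) : ℝ :=
  ∑' y : β, ∑ x : α, -(q x y * Real.logb 2 (q x y / ∑ x' : α, q x' y))

/-- The homogeneous binary entropy: `a + b` times the entropy in bits of the distribution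
proportional to `(a, b)`. -/
noncomputable def homBinEnt (a b : ℝ) : ℝ :=
  -(a * Real.logb 2 (a / (a + b))) + -(b * Real.logb 2 (b / (a + b)))

theorem condEnt_bool {β : Type*} (q : Bool → β → ℝ) :
    condEnt q = ∑' y, homBinEnt (q true y) (q false y) := by
  simp only [condEnt, homBinEnt, Fintype.sum_bool]

theorem homBinEnt_comm (a b : ℝ) : homBinEnt a b = homBinEnt b a := by
  simp only [homBinEnt, add_comm]

theorem homBinEnt_mul (k a b : ℝ) : homBinEnt (k * a) (k * b) = k * homBinEnt a b := by
  rcases eq_or_ne k 0 with rfl | hk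
  · simp [homBinEnt]
  · simp only [homBinEnt, ← mul_add, mul_div_mul_left _ _ hk]
    ring

theorem homBinEnt_self (a : ℝ) : homBinEnt a a = 2 * a := by
  rcases eq_or_ne a 0 with rfl | ha
  · simp [homBinEnt]
  · have h : a / (a + a) = 2⁻¹ := by field_simp; norm_num
    rw [homBinEnt, h, Real.logb_inv, Real.logb_self_eq_one one_lt_two]
    ring

theorem homBinEnt_nonneg {a b : ℝ} (ha : 0 ≤ a) (hb : 0 ≤ b) : 0 ≤ homBinEnt a b := by
  have key : ∀ x y : ℝ, 0 ≤ x → 0 ≤ y → 0 ≤ -(x * Real.logb 2 (x / (x + y))) := by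
    intro x y hx hy
    have := Real.logb_nonpos one_lt_two (x := x / (x + y)) (by positivity)
      (div_le_one_of_le₀ (by linarith) (by positivity))
    nlinarith
  have h := key b a hb ha
  rw [add_comm b a] at h
  exact add_nonneg (key a b ha hb) h

/-- Tangent-line bound for the perspective of `x ↦ x * log x`. -/
theorem mul_log_add_sub_le_mul_log_div {a s m : ℝ} (ha : 0 ≤ a) (has : a ≤ s) (hm : 0 ≤ m)
    (ham : a ≠ 0 → m ≠ 0) :
    a * Real.log m + a - s * m ≤ a * Real.log (a / s) := by
  rcases ha.eq_or_lt with rfl | ha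
  · simpa using mul_nonneg has hm
  · have hs : 0 < s := ha.trans_le has
    have hm : 0 < m := hm.lt_of_ne' (ham ha.ne')
    have h := Real.log_le_sub_one_of_pos (x := m / (a / s)) (by positivity)
    rw [Real.log_div hm.ne' (by positivity)] at h
    have h2 := mul_le_mul_of_nonneg_left h ha.le
    have h3 : a * (m / (a / s) - 1) = s * m - a := by field_simp
    linarith

/-- The two-term log-sum inequality. -/
theorem add_mul_logb_div_le {a s c t : ℝ} (ha : 0 ≤ a) (has : a ≤ s) (hc : 0 ≤ c) (hct : c ≤ t) :
    (a + c) * Real.logb 2 ((a + c) / (s + t)) ≤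
      a * Real.logb 2 (a / s) + c * Real.logb 2 (c / t) := by
  have hlog : (a + c) * Real.log ((a + c) / (s + t)) ≤
      a * Real.log (a / s) + c * Real.log (c / t) := by
    rcases (add_nonneg (ha.trans has) (hc.trans hct)).eq_or_lt with h | h
    · have ha0 : a = 0 := by linarith
      have hc0 : c = 0 := by linarith
      simp [ha0, hc0]
    · have hm : 0 ≤ (a + c) / (s + t) := by positivity
      have h1 := mul_log_add_sub_le_mul_log_div ha has hm fun h0 ↦
        (div_pos (add_pos_of_pos_of_nonneg (ha.lt_of_ne' h0) hc) h).ne'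
      have h2 := mul_log_add_sub_le_mul_log_div hc hct hm fun h0 ↦
        (div_pos (add_pos_of_nonneg_of_pos ha (hc.lt_of_ne' h0)) h).ne'
      have h3 : (s + t) * ((a + c) / (s + t)) = a + c := mul_div_cancel₀ _ h.ne'
      linarith
  simp only [Real.logb, ← mul_div_assoc, ← add_div]
  exact div_le_div_of_nonneg_right hlog (Real.log_pos one_lt_two).le

theorem homBinEnt_superadditive {a b c d : ℝ} (ha : 0 ≤ a) (hb : 0 ≤ b) (hc : 0 ≤ c)
    (hd : 0 ≤ d) : homBinEnt a b + homBinEnt c d ≤ homBinEnt (a + c) (b + d) := by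
  have h1 := add_mul_logb_div_le ha (le_add_of_nonneg_right hb) hc (le_add_of_nonneg_right hd)
  have h2 := add_mul_logb_div_le hb (le_add_of_nonneg_left ha) hd (le_add_of_nonneg_left hc)
  simp only [homBinEnt, add_add_add_comm a c b d]
  linarith

theorem homBinEnt_le_add {a b : ℝ} (ha : 0 ≤ a) (hb : 0 ≤ b) : homBinEnt a b ≤ a + b := by
  have h := homBinEnt_superadditive ha hb hb ha
  rw [homBinEnt_comm b a, add_comm b a, homBinEnt_self] at h
  linarith

/-- Adding an independent bit distributed proportionally to `(c, d)` does not decrease entropy. -/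
theorem mul_homBinEnt_le_homBinEnt_xor {a b c d : ℝ} (ha : 0 ≤ a) (hb : 0 ≤ b) (hc : 0 ≤ c)
    (hd : 0 ≤ d) :
    (c + d) * homBinEnt a b ≤ homBinEnt (b * c + a * d) (a * c + b * d) := by
  have h := homBinEnt_superadditive (mul_nonneg hc hb) (mul_nonneg hc ha) (mul_nonneg hd ha)
    (mul_nonneg hd hb)
  rw [homBinEnt_mul, homBinEnt_mul, homBinEnt_comm b a] at h
  simp only [mul_comm _ c, mul_comm _ d]
  linarith

/-- Conditioning on the sum with an independent bit does not increase entropy. -/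
theorem homBinEnt_add_homBinEnt_le_mul {a b c d : ℝ} (ha : 0 ≤ a) (hb : 0 ≤ b) (hc : 0 ≤ c)
    (hd : 0 ≤ d) :
    homBinEnt (b * c) (a * d) + homBinEnt (a * c) (b * d) ≤ (a + b) * homBinEnt c d := by
  have h := homBinEnt_superadditive (mul_nonneg hb hc) (mul_nonneg ha hd) (mul_nonneg ha hc)
    (mul_nonneg hb hd)
  rwa [← add_mul, ← add_mul, add_comm b a, homBinEnt_mul] at h

/-- Entropy polarization of the basic 2×2 transform:
`H(U₁ | Y₁,Y₂) ≥ H(X|Y) ≥ H(U₂ | Y₁,Y₂,U₁)` where `U₁ = X₁ ⊕ X₂`, `U₂ = X₂`. -/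
theorem stmt1 (p : Bool → ℕ → ℝ) (hp : ∀ x y, 0 ≤ p x y)
    (hsum : HasSum (fun z : Bool × ℕ => p z.1 z.2) 1) :
    condEnt (fun (u₁ : Bool) (y : ℕ × ℕ) =>
        ∑ x₂ : Bool, p (xor u₁ x₂) y.1 * p x₂ y.2) ≥ condEnt p ∧
    condEnt p ≥ condEnt (fun (u₂ : Bool) (w : ℕ × ℕ × Bool) =>
        p (xor w.2.2 u₂) w.1 * p u₂ w.2.1) := by
  set w : ℕ → ℝ := fun y ↦ p true y + p false y with hw_def
  set e : ℕ → ℝ := fun y ↦ homBinEnt (p true y) (p false y)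
  have hw0 : ∀ y, 0 ≤ w y := fun y ↦ add_nonneg (hp _ _) (hp _ _)
  have he0 : ∀ y, 0 ≤ e y := fun y ↦ homBinEnt_nonneg (hp _ _) (hp _ _)
  have hw : HasSum w 1 := by
    have h := ((Equiv.prodComm ℕ Bool).hasSum_iff.mpr hsum).prod_fiberwise
      fun y ↦ hasSum_fintype _
    simpa [hw_def] using h
  have he : Summable e :=
    hw.summable.of_nonneg_of_le he0 fun y ↦ homBinEnt_le_add (hp _ _) (hp _ _)
  have hew : Summable fun y : ℕ × ℕ ↦ e y.1 * w y.2 := he.mul_of_nonneg hw.summable he0 hw0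
  have hwe : Summable fun y : ℕ × ℕ ↦ w y.1 * e y.2 := hw.summable.mul_of_nonneg he hw0 he0
  have hww : Summable fun y : ℕ × ℕ ↦ w y.1 * w y.2 :=
    hw.summable.mul_of_nonneg hw.summable hw0 hw0
  have hew_tsum : ∑' y : ℕ × ℕ, e y.1 * w y.2 = condEnt p := by
    rw [← he.tsum_mul_tsum hw.summable hew, hw.tsum_eq, mul_one, condEnt_bool]
  have hwe_tsum : ∑' y : ℕ × ℕ, w y.1 * e y.2 = condEnt p := by
    rw [← hw.summable.tsum_mul_tsum he hwe, hw.tsum_eq, one_mul, condEnt_bool]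
  constructor
  · rw [ge_iff_le, ← hew_tsum, condEnt_bool]
    simp only [Fintype.sum_bool, Bool.xor_true, Bool.xor_false, Bool.not_true, Bool.not_false]
    refine hew.tsum_le_tsum (fun y ↦ ?_) (hww.of_nonneg_of_le (fun y ↦ ?_) fun y ↦ ?_)
    · rw [mul_comm]
      exact mul_homBinEnt_le_homBinEnt_xor (hp _ _) (hp _ _) (hp _ _) (hp _ _)
    · apply homBinEnt_nonneg <;> exact add_nonneg (mul_nonneg (hp _ _) (hp _ _))
        (mul_nonneg (hp _ _) (hp _ _))
    · refine (homBinEnt_le_add ?_ ?_).trans_eq (by simp only [hw_def]; ring) <;>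
        exact add_nonneg (mul_nonneg (hp _ _) (hp _ _)) (mul_nonneg (hp _ _) (hp _ _))
  · rw [ge_iff_le, condEnt_bool, ← hwe_tsum, ← (Equiv.prodAssoc ℕ ℕ Bool).tsum_eq]
    set f : (ℕ × ℕ) × Bool → ℝ := fun z ↦
      homBinEnt (p (xor z.2 true) z.1.1 * p true z.1.2) (p (xor z.2 false) z.1.1 * p false z.1.2)
    have hf0 : ∀ z, 0 ≤ f z := fun z ↦
      homBinEnt_nonneg (mul_nonneg (hp _ _) (hp _ _)) (mul_nonneg (hp _ _) (hp _ _))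
    have hf_fiber : ∀ y, ∑' u, f (y, u) ≤ w y.1 * e y.2 := fun y ↦ by
      rw [tsum_fintype, Fintype.sum_bool]
      simpa [f] using homBinEnt_add_homBinEnt_le_mul (hp true y.1) (hp false y.1)
        (hp true y.2) (hp false y.2)
    have hf_outer : Summable fun y ↦ ∑' u, f (y, u) :=
      hwe.of_nonneg_of_le (fun y ↦ tsum_nonneg fun u ↦ hf0 _) hf_fiber
    have hf : Summable f :=
      (summable_prod_of_nonneg hf0).mpr ⟨fun y ↦ (hasSum_fintype _).summable, hf_outer⟩
    change ∑' z, f z ≤ _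
    rw [hf.tsum_prod]
    exact hf_outer.tsum_le_tsum hf_fiber hwe
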